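/- Let d ≥ 1, R > 0, q' > 0, let γ̃ ∈ ℝᵈ, let σ = (σ_{jk}) be a symmetric positive semidefinite d×d real matrix, let ψ : ℝ → ℝ be an arbitrary function, and let h̃₁, h̃₂ : ℝᵈ → ℝ be bounded on B_R(0). Suppose u₁, u₂ : ℝᵈ → ℝ are continuous on the closed ball B̄_R(0), twice continuously differentiable on the open ball B_R(0), vanish on the sphere {x : |x| = R}, and satisfy, for i = 1, 2 and every x ∈ B_R(0): q'·u_i(x) − (1/2)·∑_{j,k} σ_{jk} ∂²_{jk}u_i(x) − ⟨∇u_i(x), γ̃⟩ + ψ(|∇u_i(x)|²) = h̃_i(x). Then sup_{x ∈ B̄_R(0)} |u₁(x) − u₂(x)| ≤ (1/q')·sup_{x ∈ B_R(0)} |h̃₁(x) − h̃₂(x)|. -/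

import Mathlib

open Metric
open scoped RealInnerProductSpace

/-- Second-order necessary condition: the Hessian is negative semidefinite at a local maximum. -/
theorem IsLocalMax.fderiv_fderiv_apply_self_nonpos {E : Type*} [NormedAddCommGroup E]
    [NormedSpace ℝ E] {f : E → ℝ} {x : E} (hmax : IsLocalMax f x) (hf : ContDiffAt ℝ 2 f x)
    (v : E) : fderiv ℝ (fderiv ℝ f) x v v ≤ 0 := by
  have hline : ∀ t : ℝ, HasDerivAt (fun t : ℝ => x + t • v) v t := fun t => by
    simpa using ((hasDerivAt_id t).smul_const v).const_add x
  have htend : Filter.Tendsto (fun t : ℝ => x + t • v) (nhds 0) (nhds x) := by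
    simpa using (hline 0).continuousAt.tendsto
  have hd1 : ∀ᶠ t in nhds (0 : ℝ),
      HasDerivAt (fun t : ℝ => f (x + t • v)) (fderiv ℝ f (x + t • v) v) t := by
    have hdiff : ∀ᶠ y in nhds x, DifferentiableAt ℝ f y := by
      filter_upwards [hf.eventually (by simp)] with y hy
      exact hy.differentiableAt (by simp)
    filter_upwards [htend.eventually hdiff] with t ht
    exact ht.hasFDerivAt.comp_hasDerivAt t (hline t)
  have hderiv : deriv (fun t : ℝ => f (x + t • v)) =ᶠ[nhds 0]
      fun t => fderiv ℝ f (x + t • v) v := hd1.mono fun t ht => ht.deriv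
  have hdiff2 : DifferentiableAt ℝ (fderiv ℝ f) x :=
    (hf.fderiv_right (m := 1) (by norm_num)).differentiableAt (by simp)
  have hd2 : deriv (deriv fun t : ℝ => f (x + t • v)) 0 = fderiv ℝ (fderiv ℝ f) x v v := by
    rw [hderiv.deriv_eq]
    have h0 : HasFDerivAt (fun y => fderiv ℝ f y v) ((fderiv ℝ (fderiv ℝ f) x).flip v)
        (x + (0 : ℝ) • v) := by
      simpa using hdiff2.hasFDerivAt.clm_apply (hasFDerivAt_const v x)
    exact (h0.comp_hasDerivAt (0 : ℝ) (hline 0)).deriv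
  have hmax' : IsLocalMax (fun t : ℝ => f (x + t • v)) 0 := by
    have h := htend.eventually hmax
    simpa [IsLocalMax, IsMaxFilter] using h
  by_contra! hpos
  have hmin : IsLocalMin (fun t : ℝ => f (x + t • v)) 0 :=
    isLocalMin_of_deriv_deriv_pos (by rwa [hd2]) hmax'.deriv_eq_zero
      hd1.self_of_nhds.continuousAt
  have hconst : (fun t : ℝ => f (x + t • v)) =ᶠ[nhds 0] fun _ => f (x + (0 : ℝ) • v) := by
    filter_upwards [hmin, hmax'] with t h1 h2
    exact le_antisymm h2 h1
  have hzero : deriv (deriv fun t : ℝ => f (x + t • v)) 0 = 0 := by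
    rw [hconst.deriv.deriv_eq]
    simp
  linarith

/-- The contraction of a positive semidefinite matrix with a negative semidefinite bilinear form
is nonpositive. -/
theorem Matrix.PosSemidef.sum_mul_bilin_nonpos {ι : Type*} [Fintype ι] [DecidableEq ι]
    {σ : Matrix ι ι ℝ} (hσ : σ.PosSemidef)
    (B : EuclideanSpace ℝ ι →L[ℝ] EuclideanSpace ℝ ι →L[ℝ] ℝ) (hB : ∀ v, B v v ≤ 0) :
    ∑ j, ∑ k, σ j k * B (EuclideanSpace.single j 1) (EuclideanSpace.single k 1) ≤ 0 := by
  obtain ⟨A, rfl⟩ : ∃ A : Matrix ι ι ℝ, σ = A.conjTranspose * A := by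
    open scoped MatrixOrder in
    exact CStarAlgebra.nonneg_iff_eq_star_mul_self.mp hσ.nonneg
  have hsum : ∑ j, ∑ k, (A.conjTranspose * A) j k *
        B (EuclideanSpace.single j 1) (EuclideanSpace.single k 1) =
      ∑ i, B (∑ j, A i j • EuclideanSpace.single j 1)
        (∑ k, A i k • EuclideanSpace.single k 1) := by
    simp only [Matrix.mul_apply, Matrix.conjTranspose_apply, star_trivial, map_sum, map_smul,
      FunLike.coe_sum, FunLike.coe_smul, Finset.sum_apply, Pi.smul_apply, smul_eq_mul,
      Finset.sum_mul, Finset.mul_sum]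
    calc _ = ∑ j, ∑ i, ∑ k, A i j * A i k *
          B (EuclideanSpace.single j 1) (EuclideanSpace.single k 1) :=
        Finset.sum_congr rfl fun j _ => Finset.sum_comm
      _ = ∑ i, ∑ j, ∑ k, A i j * A i k *
          B (EuclideanSpace.single j 1) (EuclideanSpace.single k 1) := Finset.sum_comm
      _ = _ := Finset.sum_congr rfl fun i _ => by
        rw [Finset.sum_comm]
        exact Finset.sum_congr rfl fun k _ => Finset.sum_congr rfl fun j _ => by ring
  rw [hsum]
  exact Finset.sum_nonpos fun i _ => hB _

theorem fderiv_fderiv_apply_const {E : Type*} [NormedAddCommGroup E] [NormedSpace ℝ E]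
    {f : E → ℝ} {x : E} (hf : ContDiffAt ℝ 2 f x) (v w : E) :
    fderiv ℝ (fun y => fderiv ℝ f y v) x w = fderiv ℝ (fderiv ℝ f) x w v := by
  have hdiff : DifferentiableAt ℝ (fderiv ℝ f) x :=
    (hf.fderiv_right (m := 1) (by norm_num)).differentiableAt (by simp)
  rw [fderiv_clm_apply hdiff (differentiableAt_const v)]
  simp

/-- At an interior maximum of the difference of two `C²` functions, the gradients agree and the
second-order terms are ordered. -/
theorem gradient_eq_and_sum_fderiv_le_of_isLocalMax_sub {ι : Type*} [Fintype ι] [DecidableEq ι]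
    {σ : Matrix ι ι ℝ} (hσ : σ.PosSemidef) {u v : EuclideanSpace ℝ ι → ℝ}
    {x : EuclideanSpace ℝ ι} (hu : ContDiffAt ℝ 2 u x) (hv : ContDiffAt ℝ 2 v x)
    (hmax : IsLocalMax (fun y => u y - v y) x) :
    gradient u x = gradient v x ∧
      ∑ j, ∑ k, σ j k * fderiv ℝ (fun y => fderiv ℝ u y (EuclideanSpace.single k 1)) x
          (EuclideanSpace.single j 1) ≤
        ∑ j, ∑ k, σ j k * fderiv ℝ (fun y => fderiv ℝ v y (EuclideanSpace.single k 1)) x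
          (EuclideanSpace.single j 1) := by
  have hdu : ∀ {w : EuclideanSpace ℝ ι → ℝ}, ContDiffAt ℝ 2 w x →
      ∀ᶠ y in nhds x, DifferentiableAt ℝ w y := fun hw => by
    filter_upwards [hw.eventually (by simp)] with y hy
    exact hy.differentiableAt (by simp)
  have hfd : fderiv ℝ (fun y => u y - v y) =ᶠ[nhds x] fun y => fderiv ℝ u y - fderiv ℝ v y := by
    filter_upwards [hdu hu, hdu hv] with y h1 h2
    exact fderiv_fun_sub h1 h2
  constructor
  · have h0 := hmax.fderiv_eq_zero
    rw [hfd.self_of_nhds, sub_eq_zero] at h0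
    simp only [gradient, h0]
  · have hsub : ∀ a b, fderiv ℝ (fderiv ℝ fun y => u y - v y) x a b =
        fderiv ℝ (fderiv ℝ u) x a b - fderiv ℝ (fderiv ℝ v) x a b := fun a b => by
      rw [hfd.fderiv_eq, fderiv_fun_sub
        ((hu.fderiv_right (m := 1) (by norm_num)).differentiableAt (by simp))
        ((hv.fderiv_right (m := 1) (by norm_num)).differentiableAt (by simp))]
      rfl
    have h := hσ.sum_mul_bilin_nonpos _
      (hmax.fderiv_fderiv_apply_self_nonpos (hu.sub hv))
    simp only [hsub, mul_sub, Finset.sum_sub_distrib] at h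
    simp only [fderiv_fderiv_apply_const hu, fderiv_fderiv_apply_const hv]
    linarith

/-- One-sided comparison estimate for the penalized non-linear Dirichlet problem. -/
theorem sub_le_of_penalized_dirichlet {ι : Type*} [Fintype ι] [DecidableEq ι]
    {R q S : ℝ} (hR : 0 < R) (hq : 0 < q) (hS : 0 ≤ S) {γ : EuclideanSpace ℝ ι}
    {σ : Matrix ι ι ℝ} (hσ : σ.PosSemidef) {ψ : ℝ → ℝ} {g h u v : EuclideanSpace ℝ ι → ℝ}
    (hgh : ∀ x ∈ ball (0 : EuclideanSpace ℝ ι) R, g x - h x ≤ S)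
    (huc : ContinuousOn u (closedBall 0 R)) (hvc : ContinuousOn v (closedBall 0 R))
    (hud : ContDiffOn ℝ 2 u (ball 0 R)) (hvd : ContDiffOn ℝ 2 v (ball 0 R))
    (hub : ∀ x, ‖x‖ = R → u x = 0) (hvb : ∀ x, ‖x‖ = R → v x = 0)
    (hu : ∀ x ∈ ball (0 : EuclideanSpace ℝ ι) R,
      q * u x
        - (1 / 2) * ∑ j, ∑ k, σ j k *
            fderiv ℝ (fun y => fderiv ℝ u y (EuclideanSpace.single k 1)) x
              (EuclideanSpace.single j 1)
        - ⟪gradient u x, γ⟫ + ψ (‖gradient u x‖ ^ 2) = g x)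
    (hv : ∀ x ∈ ball (0 : EuclideanSpace ℝ ι) R,
      q * v x
        - (1 / 2) * ∑ j, ∑ k, σ j k *
            fderiv ℝ (fun y => fderiv ℝ v y (EuclideanSpace.single k 1)) x
              (EuclideanSpace.single j 1)
        - ⟪gradient v x, γ⟫ + ψ (‖gradient v x‖ ^ 2) = h x) :
    ∀ x ∈ closedBall (0 : EuclideanSpace ℝ ι) R, u x - v x ≤ (1 / q) * S := by
  obtain ⟨x₀, hx₀, hmax⟩ := (isCompact_closedBall (0 : EuclideanSpace ℝ ι) R).exists_isMaxOn
    ⟨0, mem_closedBall_self hR.le⟩ (huc.sub hvc)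
  refine fun x hx => (hmax hx).trans ?_
  rcases (mem_closedBall_zero_iff.mp hx₀).eq_or_lt with hR₀ | hlt
  · have hnonneg : 0 ≤ (1 / q) * S := by positivity
    simpa [hub x₀ hR₀, hvb x₀ hR₀] using hnonneg
  · have hball : x₀ ∈ ball (0 : EuclideanSpace ℝ ι) R := mem_ball_zero_iff.mpr hlt
    have hnhds := isOpen_ball.mem_nhds hball
    obtain ⟨hgrad, hsum⟩ := gradient_eq_and_sum_fderiv_le_of_isLocalMax_sub hσ
      (hud.contDiffAt hnhds) (hvd.contDiffAt hnhds)
      (hmax.isLocalMax (Filter.mem_of_superset hnhds ball_subset_closedBall))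
    have h1 := hu x₀ hball
    have h2 := hv x₀ hball
    rw [hgrad] at h1
    have h3 := hgh x₀ hball
    change u x₀ - v x₀ ≤ (1 / q) * S
    rw [one_div, le_inv_mul_iff₀ hq]
    linarith

/-- Sup-norm stability estimate for the penalized non-linear Dirichlet problem: if `u₁, u₂`
solve the problem with data `h̃₁, h̃₂`, then
`sup_{B̄_R(0)} |u₁ − u₂| ≤ (1/q') sup_{B_R(0)} |h̃₁ − h̃₂|`. -/
theorem stability_penalized_dirichlet
    (d : ℕ) (hd : 1 ≤ d) (R : ℝ) (hR : 0 < R) (q' : ℝ) (hq' : 0 < q')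
    (γ : EuclideanSpace ℝ (Fin d)) (σ : Matrix (Fin d) (Fin d) ℝ)
    (hσ : σ.PosSemidef)
    (ψ : ℝ → ℝ) (h₁ h₂ : EuclideanSpace ℝ (Fin d) → ℝ)
    (hb₁ : ∃ M, ∀ x ∈ ball (0 : EuclideanSpace ℝ (Fin d)) R, |h₁ x| ≤ M)
    (hb₂ : ∃ M, ∀ x ∈ ball (0 : EuclideanSpace ℝ (Fin d)) R, |h₂ x| ≤ M)
    (u₁ u₂ : EuclideanSpace ℝ (Fin d) → ℝ)
    (hu₁c : ContinuousOn u₁ (closedBall 0 R))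
    (hu₂c : ContinuousOn u₂ (closedBall 0 R))
    (hu₁d : ContDiffOn ℝ 2 u₁ (ball 0 R))
    (hu₂d : ContDiffOn ℝ 2 u₂ (ball 0 R))
    (hu₁b : ∀ x : EuclideanSpace ℝ (Fin d), ‖x‖ = R → u₁ x = 0)
    (hu₂b : ∀ x : EuclideanSpace ℝ (Fin d), ‖x‖ = R → u₂ x = 0)
    (heq₁ : ∀ x ∈ ball (0 : EuclideanSpace ℝ (Fin d)) R,
      q' * u₁ x
        - (1 / 2) * ∑ j, ∑ k, σ j k *
            fderiv ℝ (fun y => fderiv ℝ u₁ y (EuclideanSpace.single k 1)) x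
              (EuclideanSpace.single j 1)
        - ⟪gradient u₁ x, γ⟫ + ψ (‖gradient u₁ x‖ ^ 2) = h₁ x)
    (heq₂ : ∀ x ∈ ball (0 : EuclideanSpace ℝ (Fin d)) R,
      q' * u₂ x
        - (1 / 2) * ∑ j, ∑ k, σ j k *
            fderiv ℝ (fun y => fderiv ℝ u₂ y (EuclideanSpace.single k 1)) x
              (EuclideanSpace.single j 1)
        - ⟪gradient u₂ x, γ⟫ + ψ (‖gradient u₂ x‖ ^ 2) = h₂ x) :
    sSup ((fun x => |u₁ x - u₂ x|) '' closedBall (0 : EuclideanSpace ℝ (Fin d)) R) ≤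
      (1 / q') * sSup ((fun x => |h₁ x - h₂ x|) '' ball (0 : EuclideanSpace ℝ (Fin d)) R) := by
  obtain ⟨M₁, hM₁⟩ := hb₁
  obtain ⟨M₂, hM₂⟩ := hb₂
  have hbdd : BddAbove ((fun x => |h₁ x - h₂ x|) '' ball (0 : EuclideanSpace ℝ (Fin d)) R) := by
    refine ⟨M₁ + M₂, ?_⟩
    rintro _ ⟨x, hx, rfl⟩
    exact (abs_sub _ _).trans (add_le_add (hM₁ x hx) (hM₂ x hx))
  have hle : ∀ x ∈ ball (0 : EuclideanSpace ℝ (Fin d)) R, |h₁ x - h₂ x| ≤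
      sSup ((fun x => |h₁ x - h₂ x|) '' ball (0 : EuclideanSpace ℝ (Fin d)) R) :=
    fun x hx => le_csSup hbdd ⟨x, hx, rfl⟩
  have hS := (abs_nonneg _).trans (hle 0 (mem_ball_self hR))
  refine csSup_le ⟨_, 0, mem_closedBall_self hR.le, rfl⟩ ?_
  rintro _ ⟨x, hx, rfl⟩
  refine abs_sub_le_iff.mpr ⟨?_, ?_⟩
  · exact sub_le_of_penalized_dirichlet hR hq' hS hσ
      (fun y hy => (abs_sub_le_iff.mp (hle y hy)).1)
      hu₁c hu₂c hu₁d hu₂d hu₁b hu₂b heq₁ heq₂ x hx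
  · exact sub_le_of_penalized_dirichlet hR hq' hS hσ
      (fun y hy => (abs_sub_le_iff.mp (hle y hy)).2)
      hu₂c hu₁c hu₂d hu₁d hu₂b hu₁b heq₂ heq₁ x hx
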